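/- arXiv:math/0201297 — 3 statements merged into one kernel-verified Lean document; each statement's English description precedes it below -/
import Mathlib

section
/- Let k be an algebraically closed field of characteristic p ≠ 2 and let n ≥ 3 be an integer. Every subgroup of PGL₂(k) isomorphic to the dihedral group of order 2n with n coprime to p is conjugate in PGL₂(k) to the subgroup generated by the images of diag(ζ, 1) and [[0,1],[1,0]], where ζ ∈ k is any primitive n-th root of unity. If p > 0, every subgroup of PGL₂(k) isomorphic to the dihedral group of order 2p is conjugate in PGL₂(k) to the subgroup generated by the images of [[1,1],[0,1]] and [[−1,0],[0,1]]. -/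
/-!
Write `x`, `y` for a rotation generator and a reflection of the given dihedral group, so that `x`
has order `n` and `x y x = y`. Since `k` is algebraically closed, `x` fixes a point of the
projective line, and moving this point to infinity turns `x` into an affine map `w ↦ aw + b`
(`exists_conj_affine`).

If `n` is nonzero in `k`, then `a ≠ 1`, because the `n`-th power of
`w ↦ w + b` is `w ↦ w + nb`; so `x` has a second fixed point, which may be taken to be `0`, and `x` becomes
`w ↦ zw` with `z` a primitive `n`-th root of unity. As `n ≥ 3`, inverting `x` forces `y` to swap
`0` and `∞`, and a homothety (which commutes with `x`) turns `y` into `w ↦ 1/w`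
(`exists_conj_semisimple`). Replacing `z` by the prescribed root does not change the group
generated.

If `n = p` is the characteristic, then `aᵖ = 1` gives `a = 1`, so `x` is a translation, which may be
rescaled to `w ↦ w + 1`. Inverting it forces `y` to be of the form `w ↦ -w + c`, and a translation
(which commutes with `x`) removes `c` since `2` is invertible (`exists_conj_unipotent`).
-/

/-- `PGL₂(k)`: the quotient of the group `GL₂(k)` of invertible `2×2` matrices over `k`
by its center (the scalar matrices). -/
abbrev PGL2 (k : Type*) [Field k] : Type _ :=
  GL (Fin 2) k ⧸ Subgroup.center (GL (Fin 2) k)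

/-! ### Projective transformations and their matrices -/

/-- `A` is a matrix representing the projective transformation `x`. Working with this relation
instead of the quotient map reduces computations to plain `2 × 2` matrices without inverses. -/
def HasRep {k : Type*} [Field k] (x : PGL2 k) (A : Matrix (Fin 2) (Fin 2) k) : Prop :=
  ∃ M : GL (Fin 2) k, (QuotientGroup.mk M : PGL2 k) = x ∧ M.val = A

namespace HasRep

variable {k : Type*} [Field k] {x y b : PGL2 k} {A B P : Matrix (Fin 2) (Fin 2) k}

theorem exists_rep (x : PGL2 k) : ∃ A, HasRep x A := by
  obtain ⟨M, rfl⟩ := QuotientGroup.mk_surjective x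
  exact ⟨_, M, rfl, rfl⟩

theorem exists_of_det_ne_zero (h : A.det ≠ 0) : ∃ x : PGL2 k, HasRep x A :=
  ⟨_, Matrix.GeneralLinearGroup.mkOfDetNeZero A h, rfl, rfl⟩

theorem det_ne_zero (h : HasRep x A) : A.det ≠ 0 := by
  obtain ⟨M, -, rfl⟩ := h
  exact (M.isUnit.map Matrix.detMonoidHom).ne_zero

theorem mul (hx : HasRep x A) (hy : HasRep y B) : HasRep (x * y) (A * B) := by
  obtain ⟨M, rfl, rfl⟩ := hx
  obtain ⟨N, rfl, rfl⟩ := hy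
  exact ⟨M * N, rfl, rfl⟩

theorem one : HasRep (1 : PGL2 k) 1 := ⟨1, rfl, rfl⟩

theorem pow (hx : HasRep x A) (m : ℕ) : HasRep (x ^ m) (A ^ m) := by
  obtain ⟨M, rfl, rfl⟩ := hx
  exact ⟨M ^ m, rfl, rfl⟩

theorem eq (hx : HasRep x A) (hy : HasRep y A) : x = y := by
  obtain ⟨M, rfl, hM⟩ := hx
  obtain ⟨N, rfl, hN⟩ := hy
  rw [Units.ext (hM.trans hN.symm)]

theorem smul (hx : HasRep x A) {c : k} (hc : c ≠ 0) : HasRep x (c • A) := by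
  obtain ⟨M, rfl, rfl⟩ := hx
  refine ⟨M * Matrix.GeneralLinearGroup.scalar (Fin 2) (Units.mk0 c hc), ?_, ?_⟩
  · rw [QuotientGroup.mk_mul_of_mem]
    rw [Matrix.GeneralLinearGroup.center_eq_range_scalar]
    exact ⟨_, rfl⟩
  · ext i j
    simp [mul_comm]

theorem unique (h₁ : HasRep x A) (h₂ : HasRep x B) : ∃ c : k, c ≠ 0 ∧ B = c • A := by
  obtain ⟨M, rfl, rfl⟩ := h₁
  obtain ⟨N, hN, rfl⟩ := h₂
  have h := QuotientGroup.eq.1 hN.symm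
  rw [Matrix.GeneralLinearGroup.center_eq_range_scalar] at h
  obtain ⟨c, hc⟩ := h
  refine ⟨c, c.ne_zero, ?_⟩
  have h2 : N = M * Matrix.GeneralLinearGroup.scalar (Fin 2) c := by rw [hc]; group
  rw [h2]
  ext i j
  simp [mul_comm]

/-- The identity `P A = c B P` says that conjugation by `P` turns the class of `A` into the
class of `B`. -/
theorem conj (hb : HasRep b P) (hx : HasRep x A) {c : k} (hc : c ≠ 0)
    (h : P * A = c • (B * P)) : HasRep (b * x * b⁻¹) B := by
  have h1 := hb.mul hx
  have hB : B.det ≠ 0 := by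
    intro h0
    apply h1.det_ne_zero
    rw [h, Matrix.det_smul, Matrix.det_mul, h0]
    simp
  obtain ⟨y, hy⟩ := exists_of_det_ne_zero hB
  have h2 := (hy.mul hb).smul hc
  rw [← h] at h2
  rw [h1.eq h2, mul_inv_cancel_right]
  exact hy

end HasRep

/-! ### Normal forms of rotation-reflection pairs -/

section TwoByTwo

variable {k : Type*} [Field k]

theorem tri_pow (a b : k) (m : ℕ) :
    ∃ e, !![a, b; 0, 1] ^ m = !![a ^ m, e; 0, 1] := by
  induction m with
  | zero => exact ⟨0, by rw [pow_zero, pow_zero, Matrix.one_fin_two]⟩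
  | succ m ih =>
    obtain ⟨e, he⟩ := ih
    exact ⟨a ^ m * b + e, by rw [pow_succ, he]; simp [pow_succ]⟩

theorem unipotent_pow (b : k) (m : ℕ) :
    !![1, b; 0, 1] ^ m = !![1, m * b; 0, 1] := by
  induction m with
  | zero => simp [Matrix.one_fin_two]
  | succ m ih => rw [pow_succ, ih]; simp; ring

theorem diag_pow (z : k) (m : ℕ) : !![z, 0; 0, 1] ^ m = !![z ^ m, 0; 0, 1] := by
  induction m with
  | zero => simp [Matrix.one_fin_two]
  | succ m ih => rw [pow_succ, ih]; simp [pow_succ]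

/-- A representative with lower right entry `1` of the trivial class is the identity matrix. -/
theorem HasRep.one_entries {x : PGL2 k} (hx : x = 1) {a b c : k}
    (h : HasRep x !![a, b; c, 1]) : a = 1 ∧ b = 0 ∧ c = 0 := by
  subst hx
  obtain ⟨t, -, ht⟩ := HasRep.one.unique h
  rw [Matrix.one_fin_two, ← Matrix.ext_iff] at ht
  have h00 := ht 0 0
  have h01 := ht 0 1
  have h10 := ht 1 0
  have h11 := ht 1 1
  simp at h00 h01 h10 h11
  exact ⟨by rw [h00, ← h11], h01, h10⟩

/-- Every projective transformation over an algebraically closed field of characteristic not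
two has a fixed point on the projective line; moving it to infinity makes it affine. -/
theorem exists_conj_affine [IsAlgClosed k] (h2 : (2 : k) ≠ 0) (x : PGL2 k) :
    ∃ B : PGL2 k, ∃ a b : k, a ≠ 0 ∧ HasRep (B * x * B⁻¹) !![a, b; 0, 1] := by
  -- It is enough to reach an upper triangular matrix, which can then be rescaled.
  suffices H : ∃ B : PGL2 k, ∃ a b d : k, HasRep (B * x * B⁻¹) !![a, b; 0, d] by
    obtain ⟨B, a, b, d, h⟩ := H
    have hdet := h.det_ne_zero
    rw [Matrix.det_fin_two_of, mul_zero, sub_zero] at hdet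
    have hd := right_ne_zero_of_mul hdet
    refine ⟨B, d⁻¹ * a, d⁻¹ * b, mul_ne_zero (inv_ne_zero hd) (left_ne_zero_of_mul hdet), ?_⟩
    simpa [Matrix.smul_of, hd] using h.smul (inv_ne_zero hd)
  obtain ⟨A, hA⟩ := HasRep.exists_rep x
  rw [Matrix.eta_fin_two A] at hA
  generalize A 0 0 = a, A 0 1 = b, A 1 0 = c, A 1 1 = d at hA
  by_cases hb : b = 0
  · obtain ⟨w, hw⟩ := HasRep.exists_of_det_ne_zero (k := k) (A := !![0, 1; 1, 0])
      (by simp [Matrix.det_fin_two_of])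
    exact ⟨w, d, c, a, hw.conj hA one_ne_zero (by simp [hb])⟩
  · -- Conjugating by `[[1,0],[t,1]]` kills the lower left entry for a root `t` of a quadratic.
    obtain ⟨s, hs⟩ := IsAlgClosed.exists_pow_nat_eq (discrim b (d - a) (-c)) two_pos
    have : NeZero (2 : k) := ⟨h2⟩
    obtain ⟨t, ht⟩ := exists_quadratic_eq_zero (a := b) (b := d - a) (c := -c) hb
      ⟨s, by rw [← hs, sq]⟩
    obtain ⟨w, hw⟩ := HasRep.exists_of_det_ne_zero (k := k) (A := !![1, 0; t, 1])
      (by simp [Matrix.det_fin_two_of])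
    refine ⟨w, a - b * t, b, d + t * b, hw.conj hA one_ne_zero ?_⟩
    ext i j
    fin_cases i <;> fin_cases j <;> simp
    · linear_combination -ht
    · ring

/-- A transformation conjugating `w ↦ zw` to its inverse, with `z² ≠ 1`, swaps the
fixed points `0` and `∞`. -/
theorem antidiag_of_invert {z α β γ δ t : k} (hz0 : z ≠ 0) (hz1 : z ≠ 1) (hz2 : z ^ 2 ≠ 1)
    (hdet : α * δ - β * γ ≠ 0)
    (h : !![z, 0; 0, 1] * (!![α, β; γ, δ] * !![z, 0; 0, 1]) = t • !![α, β; γ, δ]) :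
    α = 0 ∧ δ = 0 := by
  rw [← Matrix.ext_iff] at h
  have h00 := h 0 0
  have h01 := h 0 1
  have h10 := h 1 0
  have h11 := h 1 1
  simp at h00 h01 h10 h11
  by_cases hα : α = 0
  · refine ⟨hα, ?_⟩
    have hβ : β ≠ 0 := by rintro rfl; simp [hα] at hdet
    have : t = z := (h01.resolve_right hβ).symm
    by_contra hδ
    exact hz1 (mul_right_cancel₀ hδ (by rw [one_mul, ← this, ← h11]))
  · exfalso
    have ht : t = z ^ 2 := mul_right_cancel₀ hα (by linear_combination -h00)
    have hβ : β = 0 := by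
      by_contra hβ
      have : t = z := (h01.resolve_right hβ).symm
      exact hz1 (mul_left_cancel₀ hz0 (by rw [mul_one, ← sq, ← ht, this]))
    have hδ : δ ≠ 0 := by rintro rfl; simp [hβ] at hdet
    exact hz2 (mul_right_cancel₀ hδ (by rw [one_mul, ← ht, ← h11]))

/-- Normal form of a dihedral pair whose rotation has order prime to the characteristic. -/
theorem exists_conj_semisimple [IsAlgClosed k] (h2 : (2 : k) ≠ 0) {n : ℕ} (hn : 3 ≤ n)
    (hnk : (n : k) ≠ 0) {x y : PGL2 k} (hx : orderOf x = n) (hxy : x * (y * x) = y) :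
    ∃ B : PGL2 k, ∃ z : k, IsPrimitiveRoot z n ∧ HasRep (B * x * B⁻¹) !![z, 0; 0, 1] ∧
      HasRep (B * y * B⁻¹) !![0, 1; 1, 0] := by
  obtain ⟨B₁, z, b, hz0, h1⟩ := exists_conj_affine h2 x
  have hord : ∀ B : PGL2 k, orderOf (B * x * B⁻¹) = n := fun B => by
    rw [← hx]; exact orderOf_injective (MulAut.conj B).toMonoidHom (MulAut.conj B).injective x
  have hz1 : z ≠ 1 := by
    rintro rfl
    have h3 := h1.pow n
    rw [unipotent_pow] at h3
    have hb := (h3.one_entries (by rw [← hord B₁]; exact pow_orderOf_eq_one _)).2.1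
    have hb : b = 0 := (mul_eq_zero.1 hb).resolve_left hnk
    rw [hb, ← Matrix.one_fin_two] at h1
    have := hord B₁
    rw [h1.eq HasRep.one, orderOf_one] at this
    omega
  -- Translate the second fixed point to the origin.
  obtain ⟨B₂, hB₂⟩ := HasRep.exists_of_det_ne_zero (k := k) (A := !![1, b / (z - 1); 0, 1])
    (by simp [Matrix.det_fin_two_of])
  have hz1' := sub_ne_zero.2 hz1
  have h2 : HasRep (B₂ * (B₁ * x * B₁⁻¹) * B₂⁻¹) !![z, 0; 0, 1] :=
    hB₂.conj h1 one_ne_zero (by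
      simp; field_simp; ring)
  have e : ∀ x, B₂ * (B₁ * x * B₁⁻¹) * B₂⁻¹ = (B₂ * B₁) * x * (B₂ * B₁)⁻¹ := fun x => by group
  rw [e] at h2
  have hprim : IsPrimitiveRoot z n := by
    rw [← hord (B₂ * B₁)]
    refine ⟨?_, fun l hl => ?_⟩
    · have h3 := h2.pow (orderOf (B₂ * B₁ * x * (B₂ * B₁)⁻¹))
      rw [diag_pow] at h3
      exact (h3.one_entries (pow_orderOf_eq_one _)).1
    · apply orderOf_dvd_of_pow_eq_one
      have h3 := h2.pow l
      rw [diag_pow, hl, ← Matrix.one_fin_two] at h3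
      exact h3.eq HasRep.one
  obtain ⟨S, hS⟩ := HasRep.exists_rep (B₂ * B₁ * y * (B₂ * B₁)⁻¹)
  rw [Matrix.eta_fin_two S] at hS
  generalize S 0 0 = α, S 0 1 = β, S 1 0 = γ, S 1 1 = δ at hS
  have hrel := h2.mul (hS.mul h2)
  rw [show ∀ B : PGL2 k, B * x * B⁻¹ * (B * y * B⁻¹ * (B * x * B⁻¹)) = B * (x * (y * x)) * B⁻¹
    from fun B => by group, hxy] at hrel
  obtain ⟨t, -, ht⟩ := hS.unique hrel
  have hdet := hS.det_ne_zero
  rw [Matrix.det_fin_two_of] at hdet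
  obtain ⟨rfl, rfl⟩ := antidiag_of_invert hz0 hz1
    (fun h => absurd (Nat.le_of_dvd two_pos (hprim.dvd_of_pow_eq_one 2 h)) (by omega)) hdet ht
  have hβ : β ≠ 0 := by rintro rfl; simp at hdet
  have hγ : γ ≠ 0 := by rintro rfl; simp at hdet
  -- A homothety `w ↦ sw` turns `w ↦ (β/γ)/w` into `w ↦ 1/w` when `s² = γ/β`.
  obtain ⟨s, hs⟩ := IsAlgClosed.exists_pow_nat_eq (γ / β) two_pos
  have hs0 : s ≠ 0 := by
    rintro rfl
    exact div_ne_zero hγ hβ (by rw [← hs]; simp)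
  obtain ⟨B₃, hB₃⟩ := HasRep.exists_of_det_ne_zero (k := k) (A := !![s, 0; 0, 1])
    (by simp [Matrix.det_fin_two_of, hs0])
  have e : ∀ x, B₃ * (B₂ * B₁ * x * (B₂ * B₁)⁻¹) * B₃⁻¹
      = (B₃ * B₂ * B₁) * x * (B₃ * B₂ * B₁)⁻¹ := fun x => by group
  refine ⟨B₃ * B₂ * B₁, z, hprim, ?_, ?_⟩
  · rw [← e]
    exact hB₃.conj h2 one_ne_zero (by simp [mul_comm])
  · rw [← e]
    refine hB₃.conj hS (mul_ne_zero hs0 hβ) ?_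
    have : γ = s * β * s := by rw [eq_div_iff hβ] at hs; rw [← hs]; ring
    simp [← this]

/-- Normal form of a dihedral pair whose rotation has order equal to the characteristic. -/
theorem exists_conj_unipotent [IsAlgClosed k] (h2 : (2 : k) ≠ 0) {p : ℕ} [CharP k p]
    (hp : p.Prime) {x y : PGL2 k} (hx : orderOf x = p) (hxy : x * (y * x) = y) :
    ∃ B : PGL2 k, HasRep (B * x * B⁻¹) !![1, 1; 0, 1] ∧
      HasRep (B * y * B⁻¹) !![-1, 0; 0, 1] := by
  have := Fact.mk hp
  obtain ⟨B₁, a, b, -, h1⟩ := exists_conj_affine h2 x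
  have hord : orderOf (B₁ * x * B₁⁻¹) = p := by
    rw [← hx]; exact orderOf_injective (MulAut.conj B₁).toMonoidHom (MulAut.conj B₁).injective x
  -- The multiplier is a `p`-th root of unity, hence trivial.
  have ha : a = 1 := by
    have h3 := h1.pow p
    obtain ⟨e, he⟩ := tri_pow a b p
    rw [he] at h3
    have := (h3.one_entries (by rw [← hord]; exact pow_orderOf_eq_one _)).1
    exact frobenius_inj k p (by simpa [frobenius_def] using this)
  subst ha
  have hb : b ≠ 0 := by
    rintro rfl
    rw [← Matrix.one_fin_two] at h1
    rw [h1.eq HasRep.one, orderOf_one] at hord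
    exact hp.one_lt.ne hord
  obtain ⟨B₂, hB₂⟩ := HasRep.exists_of_det_ne_zero (k := k) (A := !![b⁻¹, 0; 0, 1])
    (by simp [Matrix.det_fin_two_of, hb])
  have h2' : HasRep (B₂ * (B₁ * x * B₁⁻¹) * B₂⁻¹) !![1, 1; 0, 1] :=
    hB₂.conj h1 one_ne_zero (by simp [hb])
  have e : ∀ x, B₂ * (B₁ * x * B₁⁻¹) * B₂⁻¹ = (B₂ * B₁) * x * (B₂ * B₁)⁻¹ := fun x => by group
  rw [e] at h2'
  obtain ⟨S, hS⟩ := HasRep.exists_rep (B₂ * B₁ * y * (B₂ * B₁)⁻¹)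
  rw [Matrix.eta_fin_two S] at hS
  generalize S 0 0 = α, S 0 1 = β, S 1 0 = γ, S 1 1 = δ at hS
  have hrel := h2'.mul (hS.mul h2')
  rw [show ∀ B : PGL2 k, B * x * B⁻¹ * (B * y * B⁻¹ * (B * x * B⁻¹)) = B * (x * (y * x)) * B⁻¹
    from fun B => by group, hxy] at hrel
  obtain ⟨t, -, ht⟩ := hS.unique hrel
  have hdet := hS.det_ne_zero
  rw [Matrix.det_fin_two_of] at hdet
  rw [← Matrix.ext_iff] at ht
  have h00 := ht 0 0
  have h01 := ht 0 1
  have h10 := ht 1 0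
  have h11 := ht 1 1
  simp at h00 h01 h10 h11
  have hγ : γ = 0 := by
    by_contra hγ
    have : t = 1 := by
      by_contra h
      grind
    grind
  subst hγ
  have hδ : δ ≠ 0 := by rintro rfl; simp at hdet
  have ht1 : t = 1 := by grind
  have hα : α = -δ := by grind
  subst hα
  -- Translate the finite fixed point of the reflection to the origin.
  obtain ⟨B₃, hB₃⟩ := HasRep.exists_of_det_ne_zero (k := k) (A := !![1, -(β / (2 * δ)); 0, 1])
    (by simp [Matrix.det_fin_two_of])
  have e : ∀ x, B₃ * (B₂ * B₁ * x * (B₂ * B₁)⁻¹) * B₃⁻¹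
      = (B₃ * B₂ * B₁) * x * (B₃ * B₂ * B₁)⁻¹ := fun x => by group
  refine ⟨B₃ * B₂ * B₁, ?_, ?_⟩
  · rw [← e]
    exact hB₃.conj h2' one_ne_zero (by simp [add_comm])
  · rw [← e]
    refine hB₃.conj hS hδ ?_
    simp
    field_simp
    ring

end TwoByTwo

/-! ### Generators of dihedral groups -/

theorem dihedral_closure (n : ℕ) :
    Subgroup.closure {DihedralGroup.r (1 : ZMod n), DihedralGroup.sr 0} = ⊤ := by
  rw [eq_top_iff]
  have hr : ∀ i : ZMod n, DihedralGroup.r i ∈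
      Subgroup.closure {DihedralGroup.r (1 : ZMod n), DihedralGroup.sr 0} := fun i => by
    obtain ⟨m, rfl⟩ := ZMod.intCast_surjective i
    rw [← DihedralGroup.r_one_zpow]
    exact Subgroup.zpow_mem _ (Subgroup.subset_closure (by simp)) m
  rintro (i | i) -
  · exact hr i
  · have := Subgroup.mul_mem _ (Subgroup.subset_closure (by simp) :
      DihedralGroup.sr (0 : ZMod n) ∈
        Subgroup.closure {DihedralGroup.r (1 : ZMod n), DihedralGroup.sr 0}) (hr i)
    simpa using this

theorem exists_dihedral_generators {P : Type*} [Group P] {n : ℕ} (G : Subgroup P)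
    (h : Nonempty (G ≃* DihedralGroup n)) :
    ∃ x y : P, orderOf x = n ∧ x * (y * x) = y ∧ G = Subgroup.closure {x, y} := by
  obtain ⟨φ⟩ := h
  let ψ : DihedralGroup n →* P := G.subtype.comp φ.symm.toMonoidHom
  have hψ : Function.Injective ψ := G.subtype_injective.comp φ.symm.injective
  refine ⟨ψ (.r 1), ψ (.sr 0), ?_, ?_, ?_⟩
  · rw [orderOf_injective ψ hψ, DihedralGroup.orderOf_r_one]
  · rw [← map_mul, ← map_mul]; simp
  · have : ψ.range = G := by
      rw [MonoidHom.range_comp, MonoidHom.range_eq_top.2 φ.symm.surjective,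
        ← MonoidHom.range_eq_map, Subgroup.range_subtype]
    rw [← this, MonoidHom.range_eq_map, ← dihedral_closure, MonoidHom.map_closure,
      Set.image_pair]

/-! ### Subgroups generated by two classes -/

theorem setOf_rep_eq {k : Type*} [Field k] {x y : PGL2 k} {A B : Matrix (Fin 2) (Fin 2) k}
    (hx : HasRep x A) (hy : HasRep y B) :
    {x : PGL2 k | ∃ M : GL (Fin 2) k,
      (QuotientGroup.mk M : PGL2 k) = x ∧ (M.val = A ∨ M.val = B)} = {x, y} := by
  ext w
  constructor
  · rintro ⟨M, hM, h | h⟩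
    · exact Or.inl (HasRep.eq ⟨M, hM, h⟩ hx)
    · exact Or.inr (HasRep.eq ⟨M, hM, h⟩ hy)
  · rintro (rfl | rfl)
    · obtain ⟨M, hM, h⟩ := hx
      exact ⟨M, hM, Or.inl h⟩
    · obtain ⟨M, hM, h⟩ := hy
      exact ⟨M, hM, Or.inr h⟩

theorem closure_pair_le_of_pow {P : Type*} [Group P] {u v y : P} {i : ℕ} (h : u ^ i = v) :
    Subgroup.closure {v, y} ≤ Subgroup.closure {u, y} := by
  rw [Subgroup.closure_le]
  rintro w (rfl | rfl)
  · rw [← h]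
    exact Subgroup.pow_mem _ (Subgroup.subset_closure (by simp)) i
  · exact Subgroup.subset_closure (by simp)


/-- For `k` algebraically closed of characteristic `p ≠ 2`: every subgroup of `PGL₂(k)`
isomorphic to the dihedral group of order `2n` (`n ≥ 3` coprime to `p`) is conjugate to
the subgroup generated by the classes of `diag(ζ,1)` and `[[0,1],[1,0]]` (`ζ` any
primitive `n`-th root of unity); and if `p > 0`, every subgroup isomorphic to the
dihedral group of order `2p` is conjugate to the subgroup generated by the classes of
`[[1,1],[0,1]]` and `[[−1,0],[0,1]]`. -/
theorem dihedral_subgroups_of_PGL2_conjugate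
    {k : Type*} [Field k] [IsAlgClosed k] (p : ℕ) [CharP k p] (hp : p ≠ 2) :
    (∀ n : ℕ, 3 ≤ n → ¬ p ∣ n →
      ∀ G : Subgroup (PGL2 k), Nonempty (G ≃* DihedralGroup n) →
      ∀ ζ : k, IsPrimitiveRoot ζ n →
        ∃ B : PGL2 k,
          Subgroup.map (MulAut.conj B).toMonoidHom G =
            Subgroup.closure {x : PGL2 k | ∃ M : GL (Fin 2) k,
              (QuotientGroup.mk M : PGL2 k) = x ∧
              (M.val = !![ζ, 0; 0, 1] ∨ M.val = !![0, 1; 1, 0])}) ∧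
    (0 < p →
      ∀ G : Subgroup (PGL2 k), Nonempty (G ≃* DihedralGroup p) →
        ∃ B : PGL2 k,
          Subgroup.map (MulAut.conj B).toMonoidHom G =
            Subgroup.closure {x : PGL2 k | ∃ M : GL (Fin 2) k,
              (QuotientGroup.mk M : PGL2 k) = x ∧
              (M.val = !![1, 1; 0, 1] ∨ M.val = !![-1, 0; 0, 1])}) := by
  have h2 : (2 : k) ≠ 0 := fun h => by
    have hd : p ∣ 2 := (CharP.cast_eq_zero_iff k p 2).1 (by exact_mod_cast h)
    rcases (Nat.dvd_prime Nat.prime_two).1 hd with h1 | h1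
    · exact CharP.char_ne_one k p h1
    · exact hp h1
  refine ⟨fun n hn hpn G hG ζ hζ => ?_, fun hp0 G hG => ?_⟩
  · obtain ⟨x, y, hx, hxy, rfl⟩ := exists_dihedral_generators G hG
    have hnk : (n : k) ≠ 0 := fun h => hpn ((CharP.cast_eq_zero_iff k p n).1 h)
    obtain ⟨B, z, hz, hBx, hBy⟩ := exists_conj_semisimple h2 hn hnk hx hxy
    have : NeZero n := ⟨by omega⟩
    refine ⟨B, ?_⟩
    obtain ⟨v, hv⟩ := HasRep.exists_of_det_ne_zero (k := k) (A := !![ζ, 0; 0, 1])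
      (by simpa [Matrix.det_fin_two_of] using hζ.ne_zero (by omega))
    rw [setOf_rep_eq hv hBy, MonoidHom.map_closure, Set.image_pair]
    -- Each of the primitive roots `z` and `ζ` is a power of the other.
    obtain ⟨i, -, hi⟩ := hz.eq_pow_of_pow_eq_one hζ.pow_eq_one
    obtain ⟨j, -, hj⟩ := hζ.eq_pow_of_pow_eq_one hz.pow_eq_one
    apply le_antisymm
    · refine closure_pair_le_of_pow (i := j) ?_
      have := hv.pow j
      rw [diag_pow, hj] at this
      exact this.eq hBx
    · refine closure_pair_le_of_pow (i := i) ?_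
      have := hBx.pow i
      rw [diag_pow, hi] at this
      exact this.eq hv
  · obtain ⟨x, y, hx, hxy, rfl⟩ := exists_dihedral_generators G hG
    have hprime : p.Prime := (CharP.char_is_prime_or_zero k p).resolve_right hp0.ne'
    obtain ⟨B, hBx, hBy⟩ := exists_conj_unipotent h2 hprime hx hxy
    refine ⟨B, ?_⟩
    rw [setOf_rep_eq hBx hBy, MonoidHom.map_closure, Set.image_pair]
    rfl
end

section
/- Let k be an algebraically closed field of characteristic p with p ≠ 2 and p ≠ 3, and let i ∈ k be a primitive 4th root of unity. Then every subgroup of PGL₂(k) isomorphic to the symmetric group S₄ is conjugate in PGL₂(k) to the subgroup generated by the images of the matrices [[i,0],[0,1]] and [[1,1],[1,−1]]. -/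
open Matrix

/-- The class of `M` in `PGL₂(k)` is trivial iff `M` is scalar, expressed through the entries. -/
lemma PGL2_mk_eq_one_iff {k : Type*} [Field k] (M : GL (Fin 2) k) :
    (QuotientGroup.mk M : PGL2 k) = 1 ↔
      M.val 0 1 = 0 ∧ M.val 1 0 = 0 ∧ M.val 0 0 = M.val 1 1 := by
  rw [QuotientGroup.eq_one_iff, Matrix.GeneralLinearGroup.mem_center_iff_val_mem_range_scalar]
  constructor
  · rintro ⟨s, hs⟩
    rw [← hs]
    simp
  · rintro ⟨h1, h2, h3⟩
    refine ⟨M.val 0 0, ?_⟩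
    ext a b
    fin_cases a <;> fin_cases b <;> simp [h1, h2, h3]

/-- Proportional matrices have the same class in `PGL₂(k)`. -/
lemma PGL2_mk_eq_of_smul {k : Type*} [Field k] (M N : GL (Fin 2) k) (s : k)
    (h : M.val = s • N.val) : (QuotientGroup.mk M : PGL2 k) = QuotientGroup.mk N := by
  symm
  rw [← inv_mul_eq_one, ← QuotientGroup.mk_inv, ← QuotientGroup.mk_mul, PGL2_mk_eq_one_iff]
  have : (N⁻¹ * M).val = s • (1 : Matrix (Fin 2) (Fin 2) k) := by
    rw [Units.val_mul, h, Matrix.mul_smul, Units.inv_mul]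
  rw [this]
  simp

lemma trace_eq_zero_of_sq {k : Type*} [Field k] (M : GL (Fin 2) k)
    (h1 : (QuotientGroup.mk M : PGL2 k) ≠ 1) (h2 : (QuotientGroup.mk M : PGL2 k) ^ 2 = 1) :
    M.val 0 0 + M.val 1 1 = 0 := by
  rw [← QuotientGroup.mk_pow] at h2
  rw [Ne, PGL2_mk_eq_one_iff] at h1
  rw [PGL2_mk_eq_one_iff] at h2
  simp only [Units.val_mul, pow_succ, pow_zero, one_mul, Matrix.mul_apply,
    Fin.sum_univ_two] at h2
  obtain ⟨h3, h4, h5⟩ := h2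
  by_contra h
  refine h1 ⟨mul_right_cancel₀ h ?_, mul_right_cancel₀ h ?_,
    sub_eq_zero.1 (mul_right_cancel₀ h ?_)⟩
  · linear_combination h3
  · linear_combination h4
  · linear_combination h5

lemma trace_sq_eq_det_of_cube {k : Type*} [Field k] (M : GL (Fin 2) k)
    (h1 : (QuotientGroup.mk M : PGL2 k) ≠ 1) (h2 : (QuotientGroup.mk M : PGL2 k) ^ 3 = 1) :
    (M.val 0 0 + M.val 1 1) ^ 2 = M.val 0 0 * M.val 1 1 - M.val 0 1 * M.val 1 0 := by
  rw [← QuotientGroup.mk_pow] at h2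
  rw [Ne, PGL2_mk_eq_one_iff] at h1
  rw [PGL2_mk_eq_one_iff] at h2
  simp only [Units.val_mul, pow_succ, pow_zero, one_mul, Matrix.mul_apply,
    Fin.sum_univ_two] at h2
  obtain ⟨h3, h4, h5⟩ := h2
  by_contra h
  have h := sub_ne_zero.2 h
  refine h1 ⟨mul_right_cancel₀ h ?_, mul_right_cancel₀ h ?_,
    sub_eq_zero.1 (mul_right_cancel₀ h ?_)⟩
  · linear_combination h3
  · linear_combination h4
  · linear_combination h5

lemma trace_sq_eq_two_det_of_fourth {k : Type*} [Field k] (M : GL (Fin 2) k)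
    (h1 : (QuotientGroup.mk M : PGL2 k) ^ 2 ≠ 1) (h2 : (QuotientGroup.mk M : PGL2 k) ^ 4 = 1) :
    M.val 0 0 + M.val 1 1 ≠ 0 ∧
    (M.val 0 0 + M.val 1 1) ^ 2 = 2 * (M.val 0 0 * M.val 1 1 - M.val 0 1 * M.val 1 0) := by
  rw [← QuotientGroup.mk_pow] at h1 h2
  rw [Ne, PGL2_mk_eq_one_iff] at h1
  rw [PGL2_mk_eq_one_iff] at h2
  simp only [Units.val_mul, pow_succ, pow_zero, one_mul, Matrix.mul_apply,
    Fin.sum_univ_two] at h1 h2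
  obtain ⟨h3, h4, h5⟩ := h2
  constructor
  · intro h
    exact h1 ⟨by linear_combination M.val 0 1 * h, by linear_combination M.val 1 0 * h,
      by linear_combination (M.val 0 0 - M.val 1 1) * h⟩
  · by_contra h
    have h := sub_ne_zero.2 h
    refine h1 ⟨mul_right_cancel₀ h ?_, mul_right_cancel₀ h ?_,
      sub_eq_zero.1 (mul_right_cancel₀ h ?_)⟩
    · linear_combination h3
    · linear_combination h4
    · linear_combination h5

/-- A `2×2` matrix whose trace and determinant are those of `diag(l, m)`, with `l ≠ m`, is
conjugate to `diag(l, m)`. -/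
lemma exists_diagonalization {k : Type*} [Field k] (M : Matrix (Fin 2) (Fin 2) k) (l m : k)
    (hlm : l ≠ m) (htr : M 0 0 + M 1 1 = l + m)
    (hdet : M 0 0 * M 1 1 - M 0 1 * M 1 0 = l * m) :
    ∃ P : GL (Fin 2) k, M * P.val = P.val * !![l, 0; 0, m] := by
  have key : ∀ r : k, (r - l) * (r - m) = 0 → ∃ v : Fin 2 → k, v ≠ 0 ∧ M *ᵥ v = r • v := by
    intro r hr
    obtain ⟨v, hv, h⟩ := (Matrix.exists_mulVec_eq_zero_iff (M := M - r • 1)).2 (by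
      rw [Matrix.det_fin_two]
      simp
      linear_combination hr + hdet - r * htr)
    refine ⟨v, hv, ?_⟩
    rw [Matrix.sub_mulVec, sub_eq_zero] at h
    rw [h, Matrix.smul_mulVec, Matrix.one_mulVec]
  obtain ⟨u, hu, hMu⟩ := key l (by ring)
  obtain ⟨v, hv, hMv⟩ := key m (by ring)
  -- Eigenvectors for distinct eigenvalues are independent: if `x • v = y • u`, apply `M`.
  have indep : ∀ x y : k, x • v = y • u → x = 0 := by
    intro x y h
    have h' := congrArg (M *ᵥ ·) h
    simp only [Matrix.mulVec_smul, hMu, hMv] at h'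
    rw [smul_comm y, ← h, smul_comm x, ← sub_eq_zero, ← sub_smul, smul_smul] at h'
    rcases smul_eq_zero.1 h' with h' | h'
    · exact (mul_eq_zero.1 h').resolve_left (sub_ne_zero.2 hlm.symm)
    · exact absurd h' hv
  have hdetP : (!![u 0, v 0; u 1, v 1]).det ≠ 0 := by
    rw [Matrix.det_fin_two_of]
    intro h
    apply hu
    ext j
    fin_cases j
    · refine indep _ (v 0) ?_
      ext j
      fin_cases j <;> simp
      · ring
      · linear_combination h
    · refine indep _ (v 1) ?_
      ext j
      fin_cases j <;> simp
      · linear_combination -h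
      · ring
  refine ⟨Matrix.GeneralLinearGroup.mkOfDetNeZero _ hdetP, ?_⟩
  have e1 := congrFun hMu 0
  have e2 := congrFun hMu 1
  have e3 := congrFun hMv 0
  have e4 := congrFun hMv 1
  simp [Matrix.mulVec, dotProduct, Fin.sum_univ_two] at e1 e2 e3 e4
  ext a b
  fin_cases a <;> fin_cases b <;>
    simp [Matrix.mul_apply, Fin.sum_univ_two, Matrix.GeneralLinearGroup.mkOfDetNeZero]
  · linear_combination e1
  · linear_combination e3
  · linear_combination e2
  · linear_combination e4

/-- Two elements of `PGL₂(k)` satisfying the order conditions of a `4`-cycle and a transposition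
with product of order `3` are simultaneously conjugate to the standard pair. -/
lemma exists_conj_pair {k : Type*} [Field k] (i : k) (hi : i ^ 2 = -1) (h2 : (2 : k) ≠ 0)
    (A T : GL (Fin 2) k) (hA : A.val = !![i, 0; 0, 1]) (hT : T.val = !![1, 1; 1, -1])
    (c t : PGL2 k) (hc2 : c ^ 2 ≠ 1) (hc4 : c ^ 4 = 1) (ht1 : t ≠ 1) (ht2 : t ^ 2 = 1)
    (hct1 : c * t ≠ 1) (hct3 : (c * t) ^ 3 = 1) :
    ∃ B : PGL2 k, B * c * B⁻¹ = QuotientGroup.mk A ∧ B * t * B⁻¹ = QuotientGroup.mk T := by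
  -- It suffices to treat the case where `c` is already the class of `diag(i, 1)`.
  have diag_case : ∀ t : PGL2 k, t ≠ 1 → t ^ 2 = 1 → (QuotientGroup.mk A : PGL2 k) * t ≠ 1 →
      ((QuotientGroup.mk A : PGL2 k) * t) ^ 3 = 1 →
      ∃ B : PGL2 k, B * QuotientGroup.mk A * B⁻¹ = QuotientGroup.mk A ∧
        B * t * B⁻¹ = QuotientGroup.mk T := by
    intro t ht1 ht2 hct1 hct3
    obtain ⟨N, rfl⟩ := QuotientGroup.mk_surjective t
    have htr := trace_eq_zero_of_sq N ht1 ht2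
    rw [← QuotientGroup.mk_mul] at hct1 hct3
    have h3 := trace_sq_eq_det_of_cube (A * N) hct1 hct3
    have hdet : N.val.det ≠ 0 := (Matrix.isUnits_det_units N).ne_zero
    rw [Matrix.det_fin_two] at hdet
    simp [hA, Matrix.mul_apply, Fin.sum_univ_two] at h3
    have hd : N.val 1 1 = - N.val 0 0 := by linear_combination htr
    have hi0 : i ≠ 0 := by rintro rfl; norm_num at hi
    rw [hd] at h3 hdet
    have hbe : N.val 0 1 * N.val 1 0 = N.val 0 0 ^ 2 := by
      refine mul_left_cancel₀ hi0 ?_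
      linear_combination h3 - N.val 0 0 ^ 2 * hi
    have ha : N.val 0 0 ≠ 0 := by
      intro h
      rw [h] at hbe hdet
      apply hdet
      linear_combination -hbe
    have hb : N.val 0 1 ≠ 0 := by
      intro h
      rw [h, zero_mul] at hbe
      exact ha (pow_eq_zero_iff two_ne_zero |>.1 hbe.symm)
    have hD : (!![N.val 0 0, 0; 0, N.val 0 1]).det ≠ 0 := by
      rw [Matrix.det_fin_two_of]
      simp [ha, hb]
    refine ⟨QuotientGroup.mk (Matrix.GeneralLinearGroup.mkOfDetNeZero _ hD), ?_, ?_⟩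
    · rw [mul_inv_eq_iff_eq_mul, ← QuotientGroup.mk_mul, ← QuotientGroup.mk_mul]
      apply PGL2_mk_eq_of_smul _ _ 1
      simp [hA, Matrix.GeneralLinearGroup.mkOfDetNeZero, mul_comm]
    · rw [mul_inv_eq_iff_eq_mul, ← QuotientGroup.mk_mul, ← QuotientGroup.mk_mul]
      apply PGL2_mk_eq_of_smul _ _ (N.val 0 0)
      ext a b
      fin_cases a <;> fin_cases b <;>
        simp [hT, Matrix.mul_apply, Fin.sum_univ_two, Matrix.GeneralLinearGroup.mkOfDetNeZero, hd]
      · rw [hbe]; ring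
      · ring
  obtain ⟨M, rfl⟩ := QuotientGroup.mk_surjective c
  obtain ⟨hτ, h4⟩ := trace_sq_eq_two_det_of_fourth M hc2 hc4
  set τ := M.val 0 0 + M.val 1 1 with hτd
  have hi0 : i ≠ 0 := by rintro rfl; norm_num at hi
  obtain ⟨P, hP⟩ := exists_diagonalization M.val (τ / 2 * (1 + i)) (τ / 2 * (1 - i))
    (by
      intro h
      have : τ * i = 0 := by linear_combination (norm := (field_simp; ring)) h
      exact mul_ne_zero hτ hi0 this)
    (by rw [← hτd]; field_simp; ring)
    (by field_simp; linear_combination -2 * h4 + τ ^ 2 * hi)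
  have hPc : (QuotientGroup.mk P : PGL2 k)⁻¹ * QuotientGroup.mk M * QuotientGroup.mk P =
      QuotientGroup.mk A := by
    rw [mul_assoc, inv_mul_eq_iff_eq_mul, ← QuotientGroup.mk_mul, ← QuotientGroup.mk_mul]
    -- `1 + i = i * (1 - i)`, so the eigenvalue matrix is `(τ / 2 * (1 - i)) • diag(i, 1)`.
    apply PGL2_mk_eq_of_smul _ _ (τ / 2 * (1 - i))
    rw [Units.val_mul, Units.val_mul, hP, hA, ← Matrix.mul_smul]
    congr 1
    ext a b
    fin_cases a <;> fin_cases b <;> simp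
    linear_combination τ / 2 * hi
  generalize (QuotientGroup.mk M : PGL2 k) = c at *
  generalize (QuotientGroup.mk P : PGL2 k) = q at *
  have hq : ∀ x : PGL2 k, q⁻¹ * x * q = MulAut.conj q⁻¹ x := by
    intro x; simp
  rw [hq] at hPc
  obtain ⟨B, h1, h2⟩ := diag_case (MulAut.conj q⁻¹ t)
    (by simpa only [Ne, EmbeddingLike.map_eq_one_iff] using ht1)
    (by rw [← map_pow, ht2, map_one])
    (by rw [← hPc, ← map_mul]; simpa only [Ne, EmbeddingLike.map_eq_one_iff] using hct1)
    (by rw [← hPc, ← map_mul, ← map_pow, hct3, map_one])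
  refine ⟨B * q⁻¹, ?_, ?_⟩
  · rw [← h1, ← hPc, MulAut.conj_apply]; group
  · rw [← h2, MulAut.conj_apply]; group

/-- For `k` algebraically closed of characteristic `p ∉ {2, 3}` and `i ∈ k` a primitive
4th root of unity, every subgroup of `PGL₂(k)` isomorphic to `S₄` is conjugate to the
subgroup generated by the classes of `[[i,0],[0,1]]` and `[[1,1],[1,−1]]`. -/
theorem S4_subgroups_of_PGL2_conjugate
    {k : Type*} [Field k] [IsAlgClosed k] (p : ℕ) [CharP k p]
    (hp2 : p ≠ 2) (hp3 : p ≠ 3) (i : k) (hi : IsPrimitiveRoot i 4)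
    (G : Subgroup (PGL2 k)) (hG : Nonempty (G ≃* Equiv.Perm (Fin 4))) :
    ∃ B : PGL2 k,
      Subgroup.map (MulAut.conj B).toMonoidHom G =
        Subgroup.closure {x : PGL2 k | ∃ M : GL (Fin 2) k,
          (QuotientGroup.mk M : PGL2 k) = x ∧
          (M.val = !![i, 0; 0, 1] ∨ M.val = !![1, 1; 1, -1])} := by
  have hi2 : i ^ 2 = -1 := by
    have h4 := hi.pow_eq_one
    have h2 := hi.pow_ne_one_of_pos_of_lt (l := 2) (by norm_num) (by norm_num)
    have : (i ^ 2 - 1) * (i ^ 2 + 1) = 0 := by linear_combination h4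
    rcases mul_eq_zero.1 this with h | h
    · exact absurd (sub_eq_zero.1 h) h2
    · linear_combination h
  have h2 : (2 : k) ≠ 0 := by
    intro h
    refine hi.pow_ne_one_of_pos_of_lt (l := 2) (by norm_num) (by norm_num) ?_
    linear_combination hi2 - h
  obtain ⟨e⟩ := hG
  have hi0 : i ≠ 0 := by rintro rfl; norm_num at hi2
  have hdA : (!![i, 0; 0, 1] : Matrix (Fin 2) (Fin 2) k).det ≠ 0 := by
    simpa [Matrix.det_fin_two_of] using hi0
  have hdT : (!![1, 1; 1, -1] : Matrix (Fin 2) (Fin 2) k).det ≠ 0 := by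
    rw [Matrix.det_fin_two_of]
    intro h
    apply h2
    linear_combination -h
  let A := Matrix.GeneralLinearGroup.mkOfDetNeZero _ hdA
  let T := Matrix.GeneralLinearGroup.mkOfDetNeZero _ hdT
  have hA : A.val = !![i, 0; 0, 1] := rfl
  have hT : T.val = !![1, 1; 1, -1] := rfl
  let f : Equiv.Perm (Fin 4) →* PGL2 k := G.subtype.comp e.symm.toMonoidHom
  have hf : Function.Injective f := G.subtype_injective.comp e.symm.injective
  have hfr : f.range = G := by
    rw [MonoidHom.range_comp, MonoidHom.range_eq_top.2 e.symm.surjective,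
      ← MonoidHom.range_eq_map, Subgroup.range_subtype]
  have hne : ∀ x, x ≠ 1 → f x ≠ 1 := fun x hx h => hx (hf (by rw [h, map_one]))
  let c : Equiv.Perm (Fin 4) := finRotate 4
  let t : Equiv.Perm (Fin 4) := Equiv.swap 0 1
  have hgen : Subgroup.closure {c, t} = ⊤ := by
    have := Equiv.Perm.closure_cycle_adjacent_swap (σ := c) isCycle_finRotate
      support_finRotate 0
    simpa [c, t] using this
  obtain ⟨B, hBc, hBt⟩ := exists_conj_pair i hi2 h2 A T hA hT (f c) (f t)
    (by rw [← map_pow]; exact hne _ (by decide))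
    (by rw [← map_pow, show c ^ 4 = 1 by decide, map_one])
    (hne _ (by decide))
    (by rw [← map_pow, show t ^ 2 = 1 by decide, map_one])
    (by rw [← map_mul]; exact hne _ (by decide))
    (by rw [← map_mul, ← map_pow, show (c * t) ^ 3 = 1 by decide, map_one])
  refine ⟨B, ?_⟩
  rw [← hfr, MonoidHom.range_eq_map, ← hgen, MonoidHom.map_closure, MonoidHom.map_closure]
  congr 1
  rw [Set.image_pair, Set.image_pair]
  simp only [MulEquiv.coe_toMonoidHom, MulAut.conj_apply, hBc, hBt]
  ext x
  simp only [Set.mem_insert_iff, Set.mem_singleton_iff, Set.mem_ofPred_eq]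
  constructor
  · rintro (rfl | rfl)
    · exact ⟨A, rfl, Or.inl hA⟩
    · exact ⟨T, rfl, Or.inr hT⟩
  · rintro ⟨M, rfl, h | h⟩
    · left; rw [Units.ext (h.trans hA.symm)]
    · right; rw [Units.ext (h.trans hT.symm)]
end

section
/- Let k be an algebraically closed field of characteristic p ≠ 2 (p > 0), and let q = p^s be a power of p. Then every subgroup of PGL₂(k) abstractly isomorphic to PGL₂(F_q) is conjugate in PGL₂(k) to the image of the injective homomorphism PGL₂(F_q) → PGL₂(k) induced by the field inclusion F_q ⊆ k; likewise every subgroup of PGL₂(k) abstractly isomorphic to PSL₂(F_q) is conjugate in PGL₂(k) to the image of PSL₂(F_q) under this homomorphism. -/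
/-- `PSL₂(F)`: the special linear group modulo its center; over a field this is
(abstractly) the image of `SL₂(F)` in `PGL₂(F)`. -/
abbrev PSL2 (F : Type*) [Field F] : Type _ :=
  Matrix.SpecialLinearGroup (Fin 2) F ⧸ Subgroup.center (Matrix.SpecialLinearGroup (Fin 2) F)

/-! ### Coordinates on `PGL₂` -/

/-- `PGLRep X a b c d` says that the matrix with rows `(a, b)` and `(c, d)` represents the class
`X ∈ PGL₂(k)`. -/
def PGLRep {k : Type*} [Field k] (X : PGL2 k) (a b c d : k) : Prop :=
  ∃ M : GL (Fin 2) k, (QuotientGroup.mk M : PGL2 k) = X ∧ M.val = !![a, b; c, d]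

namespace PGLRep

variable {k : Type*} [Field k] {X Y : PGL2 k} {a b c d a' b' c' d' : k}

lemma exists_rep (X : PGL2 k) : ∃ a b c d, PGLRep X a b c d := by
  obtain ⟨M, rfl⟩ := QuotientGroup.mk_surjective X
  exact ⟨_, _, _, _, M, rfl, Matrix.eta_fin_two M.val⟩

lemma det (h : PGLRep X a b c d) : a * d - b * c ≠ 0 := by
  obtain ⟨M, -, hM⟩ := h
  have : M.val.det ≠ 0 := M.det_ne_zero
  rwa [hM, Matrix.det_fin_two_of] at this

lemma exists_class (h : a * d - b * c ≠ 0) : ∃ X : PGL2 k, PGLRep X a b c d :=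
  ⟨_, Matrix.GeneralLinearGroup.mkOfDetNeZero !![a, b; c, d]
    (by rwa [Matrix.det_fin_two_of]), rfl, rfl⟩

lemma one : PGLRep (1 : PGL2 k) 1 0 0 1 := ⟨1, rfl, by simp [Matrix.one_fin_two]⟩

lemma mul (h : PGLRep X a b c d) (h' : PGLRep Y a' b' c' d') :
    PGLRep (X * Y) (a * a' + b * c') (a * b' + b * d') (c * a' + d * c') (c * b' + d * d') := by
  obtain ⟨M, rfl, hM⟩ := h
  obtain ⟨N, rfl, hN⟩ := h'
  exact ⟨M * N, rfl, by rw [Units.val_mul, hM, hN, Matrix.mul_fin_two]⟩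

lemma congr (h : PGLRep X a b c d) (ha : a = a') (hb : b = b') (hc : c = c') (hd : d = d') :
    PGLRep X a' b' c' d' := by
  subst ha hb hc hd; exact h

lemma unique (h : PGLRep X a b c d) (h' : PGLRep X a' b' c' d') :
    ∃ r : k, r ≠ 0 ∧ a' = r * a ∧ b' = r * b ∧ c' = r * c ∧ d' = r * d := by
  obtain ⟨M, rfl, hM⟩ := h
  have hd' := h'.det
  obtain ⟨N, hNM, hN⟩ := h'
  obtain ⟨r, hr⟩ := Matrix.GeneralLinearGroup.mem_center_iff_val_mem_range_scalar.1
    (QuotientGroup.eq.1 hNM.symm)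
  have hN' : N.val = M.val * Matrix.scalar (Fin 2) r := by
    rw [hr, ← Units.val_mul, mul_inv_cancel_left]
  rw [hN, hM] at hN'
  have e (i j : Fin 2) := congrFun (congrFun hN' i) j
  have e00 := e 0 0
  have e01 := e 0 1
  have e10 := e 1 0
  have e11 := e 1 1
  simp [Matrix.mul_apply, Matrix.diagonal] at e00 e01 e10 e11
  refine ⟨r, ?_, by rw [e00, mul_comm], by rw [e01, mul_comm], by rw [e10, mul_comm],
    by rw [e11, mul_comm]⟩
  rintro rfl
  apply hd'
  simp [e00, e01, e10, e11]

lemma eq_of_smul (h : PGLRep X a b c d) (h' : PGLRep Y a' b' c' d') (r : k)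
    (ha : a' = r * a) (hb : b' = r * b) (hc : c' = r * c) (hd : d' = r * d) : X = Y := by
  obtain ⟨M, rfl, hM⟩ := h
  obtain ⟨N, rfl, hN⟩ := h'
  refine QuotientGroup.eq.2
    (Matrix.GeneralLinearGroup.mem_center_iff_val_mem_range_scalar.2 ⟨r, ?_⟩)
  have hN' : N.val = M.val * Matrix.scalar (Fin 2) r := by
    rw [hN, hM, ha, hb, hc, hd]
    ext i j
    fin_cases i <;> fin_cases j <;> simp [Matrix.mul_apply, Fin.sum_univ_two, mul_comm]
  rw [Units.val_mul, hN', ← mul_assoc, ← Units.val_mul, inv_mul_cancel, Units.val_one, one_mul]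

lemma eq (h : PGLRep X a b c d) (h' : PGLRep Y a b c d) : X = Y :=
  h.eq_of_smul h' 1 (by simp) (by simp) (by simp) (by simp)

lemma smul (h : PGLRep X a b c d) {r : k} (hr : r ≠ 0)
    (ha : a' = r * a) (hb : b' = r * b) (hc : c' = r * c) (hd : d' = r * d) :
    PGLRep X a' b' c' d' := by
  have hdet : a' * d' - b' * c' ≠ 0 := by
    have : a' * d' - b' * c' = r ^ 2 * (a * d - b * c) := by rw [ha, hb, hc, hd]; ring
    rw [this]
    exact mul_ne_zero (pow_ne_zero _ hr) h.det
  obtain ⟨Y, hY⟩ := exists_class hdet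
  rwa [h.eq_of_smul hY r ha hb hc hd]

lemma inv (h : PGLRep X a b c d) : PGLRep X⁻¹ d (-b) (-c) a := by
  obtain ⟨Y, hY⟩ := exists_class (a := d) (b := -b) (c := -c) (d := a)
    (by have := h.det; contrapose! this; linear_combination this)
  have : X * Y = 1 := by
    refine (one.eq_of_smul (h.mul hY) (a * d - b * c) ?_ ?_ ?_ ?_).symm <;> ring
  rwa [inv_eq_of_mul_eq_one_right this]

/-- Powers of an upper triangular class are upper triangular, with the powers of the diagonal
entries on the diagonal. -/
lemma pow_upper (h : PGLRep X a b 0 d) (n : ℕ) : ∃ y, PGLRep (X ^ n) (a ^ n) y 0 (d ^ n) := by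
  induction n with
  | zero => exact ⟨0, by simpa using one⟩
  | succ n ih =>
    obtain ⟨y, hy⟩ := ih
    rw [pow_succ]
    exact ⟨_, (hy.mul h).congr (by ring) rfl (by ring) (by ring)⟩

/-- The centralizer in `PGL₂(k)` of the elementary unipotent class consists of upper unipotent
classes: the scalar by which the two products could differ is forced to be `1`. -/
lemma unipotent_of_commute (hX : PGLRep X 1 1 0 1) (h : Commute Y X) :
    ∃ x, PGLRep Y 1 x 0 1 := by
  obtain ⟨a, b, c, d, hY⟩ := exists_rep Y
  have h1 := hY.mul hX
  rw [h.eq] at h1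
  obtain ⟨r, hr, e1, e2, e3, e4⟩ := h1.unique (hX.mul hY)
  have hc : c = 0 := by
    by_contra hc
    have : r = 1 := by
      apply mul_right_cancel₀ hc
      linear_combination -e3
    subst this
    exact hc (by linear_combination e1)
  subst hc
  have hdet := hY.det
  have ha : a ≠ 0 := by rintro rfl; simp at hdet
  have : r = 1 := by
    apply mul_right_cancel₀ ha
    linear_combination -e1
  subst this
  have had : d = a := by linear_combination e2
  subst had
  exact ⟨b / d, hY.smul (inv_ne_zero ha) (by field_simp) (by field_simp) (by simp) (by field_simp)⟩

/-- Over an algebraically closed field every class is conjugate to an upper triangular one. -/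
lemma exists_conj_upper [IsAlgClosed k] (X : PGL2 k) :
    ∃ B : PGL2 k, ∃ a b d, PGLRep (B * X * B⁻¹) a b 0 d := by
  obtain ⟨a, b, c, d, hX⟩ := exists_rep X
  by_cases hc : c = 0
  · subst hc
    exact ⟨1, a, b, d, by simpa using hX⟩
  -- `(x, 1)` is an eigenvector as soon as `x` solves the following quadratic equation
  obtain ⟨x, hx⟩ : ∃ x, c * x ^ 2 + (d - a) * x - b = 0 := by
    have hdeg : (Polynomial.C c * Polynomial.X ^ 2 + Polynomial.C (d - a) * Polynomial.X
        + Polynomial.C (-b)).degree ≠ 0 := by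
      rw [Polynomial.degree_quadratic hc]; decide
    obtain ⟨x, hx⟩ := IsAlgClosed.exists_root _ hdeg
    refine ⟨x, ?_⟩
    simp [Polynomial.IsRoot] at hx
    linear_combination hx
  obtain ⟨B, hB⟩ := exists_class (a := x) (b := (-1 : k)) (c := 1) (d := 0) (by simp)
  refine ⟨B⁻¹, _, _, _, ((hB.inv.mul hX).mul hB.inv.inv).congr rfl rfl ?_ rfl⟩
  linear_combination hx

/-- In characteristic `p`, an element of order `p` of `PGL₂(k)` is conjugate to the class of the
elementary unipotent matrix: in triangular form its diagonal entries have equal `p`-th powers,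
hence are equal. -/
lemma exists_conj_unipotent [IsAlgClosed k] (p : ℕ) [Fact p.Prime] [CharP k p]
    (hp : X ^ p = 1) (h1 : X ≠ 1) : ∃ B : PGL2 k, PGLRep (B * X * B⁻¹) 1 1 0 1 := by
  obtain ⟨B, a, b, d, hX⟩ := exists_conj_upper X
  obtain ⟨y, hy⟩ := hX.pow_upper p
  rw [conj_pow, hp, mul_one, mul_inv_cancel] at hy
  obtain ⟨r, hr, e1, e2, e3, e4⟩ := one.unique hy
  have had : a = d := frobenius_inj k p (by simp only [frobenius_def]; rw [e1, e4])
  subst had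
  have hdet := hX.det
  have ha : a ≠ 0 := by rintro rfl; simp at hdet
  have hb : b ≠ 0 := by
    rintro rfl
    apply h1
    have := one.eq_of_smul hX a (by ring) (by ring) (by ring) (by ring)
    simpa using this.symm
  obtain ⟨D, hD⟩ := exists_class (a := a / b) (b := 0) (c := 0) (d := (1 : k))
    (by simp [ha, hb])
  refine ⟨D * B, ?_⟩
  have := ((hD.mul hX).mul hD.inv).smul (r := b / a ^ 2) (by positivity)
    (a' := 1) (b' := 1) (c' := 0) (d' := 1) (by field_simp; ring) (by field_simp; ring)
    (by field_simp; ring) (by field_simp; ring)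
  simpa [mul_assoc] using this

end PGLRep

/-! ### Generators of `SL₂` -/

section Generators

variable {F : Type*} [Field F]

/-- The upper unipotent matrix with off-diagonal entry `t`. -/
def slU (t : F) : Matrix.SpecialLinearGroup (Fin 2) F :=
  ⟨!![1, t; 0, 1], by simp [Matrix.det_fin_two_of]⟩

/-- The Weyl element of `SL₂`. -/
def slW : Matrix.SpecialLinearGroup (Fin 2) F :=
  ⟨!![0, 1; -1, 0], by simp [Matrix.det_fin_two_of]⟩

/-- The diagonal matrix with entries `a` and `a⁻¹`. -/
def slD (a : F) (ha : a ≠ 0) : Matrix.SpecialLinearGroup (Fin 2) F :=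
  ⟨!![a, 0; 0, a⁻¹], by simp [Matrix.det_fin_two_of, ha]⟩

lemma slU_val (t : F) : (slU t).val = !![1, t; 0, 1] := rfl

lemma slW_val : (slW : Matrix.SpecialLinearGroup (Fin 2) F).val = !![0, 1; -1, 0] := rfl

lemma slD_val (a : F) (ha : a ≠ 0) : (slD a ha).val = !![a, 0; 0, a⁻¹] := rfl

lemma slU_add (s t : F) : slU (s + t) = slU s * slU t := by
  apply Subtype.ext
  simp [slU_val, add_comm]

lemma slU_one_pow (n : ℕ) : (slU (1 : F)) ^ n = slU (n : F) := by
  induction n with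
  | zero => apply Subtype.ext; simp [slU_val, Matrix.one_fin_two]
  | succ n ih => rw [pow_succ, ih, Nat.cast_succ, slU_add]

lemma slU_zero : slU (0 : F) = 1 := by simpa using (slU_one_pow (F := F) 0).symm

lemma slW_sq : (slW : Matrix.SpecialLinearGroup (Fin 2) F) * slW = -1 := by
  apply Subtype.ext
  simp [slW_val, Matrix.one_fin_two]

lemma slU_slW_cube : (slU (1 : F) * slW) * (slU (1 : F) * slW) * (slU (1 : F) * slW) = 1 := by
  apply Subtype.ext
  simp [slU_val, slW_val, Matrix.one_fin_two]

lemma slD_mul_slU (a : F) (ha : a ≠ 0) (t : F) :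
    slD a ha * slU t = slU (a ^ 2 * t) * slD a ha := by
  apply Subtype.ext
  simp [slU_val, slD_val]
  field_simp

lemma slU_one_notMem_center :
    slU (1 : F) ∉ Subgroup.center (Matrix.SpecialLinearGroup (Fin 2) F) := by
  intro h
  have := congrArg (fun M : Matrix.SpecialLinearGroup (Fin 2) F => M.val 0 0)
    (Subgroup.mem_center_iff.1 h slW)
  simp [slU_val, slW_val] at this

lemma slW_notMem_center :
    slW ∉ Subgroup.center (Matrix.SpecialLinearGroup (Fin 2) F) := by
  intro h
  have := congrArg (fun M : Matrix.SpecialLinearGroup (Fin 2) F => M.val 0 0)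
    (Subgroup.mem_center_iff.1 h (slU 1))
  simp [slU_val, slW_val] at this

/-- `SL₂(F)` is generated by the upper unipotent matrices and the Weyl element: a matrix with
lower left entry `c ≠ 0` is a product upper-lower-upper of unipotent matrices, and multiplication
by a lower unipotent matrix reduces to that case. -/
lemma sl_subgroup_eq_top (H : Subgroup (Matrix.SpecialLinearGroup (Fin 2) F))
    (hU : ∀ t, slU t ∈ H) (hW : slW ∈ H) (M : Matrix.SpecialLinearGroup (Fin 2) F) : M ∈ H := by
  have hL (t : F) : slW * slU (-t) * slW⁻¹ ∈ H := H.mul_mem (H.mul_mem hW (hU _)) (H.inv_mem hW)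
  have hL' (t : F) : (slW * slU (-t) * slW⁻¹ : Matrix.SpecialLinearGroup (Fin 2) F).val
      = !![1, 0; t, 1] := by
    simp [slU_val, slW_val, Matrix.SpecialLinearGroup.coe_inv, Matrix.adjugate_fin_two_of]
  have key (M : Matrix.SpecialLinearGroup (Fin 2) F) (hc : M 1 0 ≠ 0) : M ∈ H := by
    have hdet := M.det_coe
    rw [Matrix.det_fin_two] at hdet
    have : M = slU ((M 0 0 - 1) / M 1 0) * (slW * slU (-(M 1 0)) * slW⁻¹)
        * slU ((M 1 1 - 1) / M 1 0) := by
      apply Subtype.ext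
      rw [Matrix.SpecialLinearGroup.coe_mul, Matrix.SpecialLinearGroup.coe_mul, hL']
      ext i j
      fin_cases i <;> fin_cases j <;>
        simp [slU, Matrix.mul_apply, Fin.sum_univ_two] <;> field_simp
      · ring
      · linear_combination -hdet
      · ring
    rw [this]
    exact H.mul_mem (H.mul_mem (hU _) (hL _)) (hU _)
  by_cases hc : M 1 0 = 0
  · have hdet := M.det_coe
    rw [Matrix.det_fin_two, hc] at hdet
    have hd : M 1 1 ≠ 0 := by intro h; simp [h] at hdet
    refine (H.mul_mem_cancel_right (hL 1)).1 (key _ ?_)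
    have : (M * (slW * slU (-1) * slW⁻¹)).val 1 0 = M 1 1 := by
      rw [Matrix.SpecialLinearGroup.coe_mul, hL']
      simp [Matrix.mul_apply, Fin.sum_univ_two, hc]
    rwa [this]
  · exact key M hc

end Generators

/-! ### Standard homomorphisms -/

/-- The homomorphism `GL₂(F) → PGL₂(k)` induced by a field homomorphism `F → k`. -/
def stdHom {F k : Type*} [Field F] [Field k] (f : F →+* k) : GL (Fin 2) F →* PGL2 k :=
  (QuotientGroup.mk' _).comp (Matrix.GeneralLinearGroup.map f)

lemma stdHom_rep {F k : Type*} [Field F] [Field k] (f : F →+* k) (M : GL (Fin 2) F) :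
    PGLRep (stdHom f M) (f (M 0 0)) (f (M 0 1)) (f (M 1 0)) (f (M 1 1)) :=
  ⟨Matrix.GeneralLinearGroup.map f M, rfl, by
    rw [Matrix.eta_fin_two (Matrix.GeneralLinearGroup.map f M).val]; rfl⟩

lemma stdHom_slU_rep {F k : Type*} [Field F] [Field k] (f : F →+* k) (t : F) :
    PGLRep (stdHom f (slU t).toGL) 1 (f t) 0 1 :=
  (stdHom_rep f (slU t).toGL).congr (map_one f) rfl (map_zero f) (map_one f)

lemma stdHom_slW_rep {F k : Type*} [Field F] [Field k] (f : F →+* k) :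
    PGLRep (stdHom f slW.toGL) 0 1 (-1) 0 :=
  (stdHom_rep f slW.toGL).congr (map_zero f) (map_one f) ((map_neg f 1).trans (by rw [map_one]))
    (map_zero f)

/-- Homomorphisms from a finite field to a given field have the same image, so they differ by an
endomorphism of the finite field. -/
lemma exists_comp_eq {F k : Type*} [Field F] [Finite F] [Field k] (f g : F →+* k) :
    ∃ σ : F →+* F, g.comp σ = f := by
  classical
  have := Fintype.ofFinite F
  have hne : (Polynomial.X ^ Fintype.card F - Polynomial.X : Polynomial k) ≠ 0 :=
    FiniteField.X_pow_card_sub_X_ne_zero k Fintype.one_lt_card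
  have hroot (h : F →+* k) (x : F) :
      h x ∈ (Polynomial.X ^ Fintype.card F - Polynomial.X : Polynomial k).roots.toFinset := by
    rw [Multiset.mem_toFinset, Polynomial.mem_roots hne]
    simp [Polynomial.IsRoot, ← map_pow, FiniteField.pow_card]
  have himg : Finset.univ.image g =
      (Polynomial.X ^ Fintype.card F - Polynomial.X : Polynomial k).roots.toFinset := by
    apply Finset.eq_of_subset_of_card_le
    · intro y hy
      obtain ⟨x, -, rfl⟩ := Finset.mem_image.1 hy
      exact hroot g x
    · rw [Finset.card_image_of_injective _ g.injective, Finset.card_univ]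
      refine (Multiset.toFinset_card_le _).trans ((Polynomial.card_roots' _).trans ?_)
      rw [FiniteField.X_pow_card_sub_X_natDegree_eq k Fintype.one_lt_card]
  have hex (x : F) : ∃ y, g y = f x := by
    have := hroot f x
    rw [← himg] at this
    obtain ⟨y, -, hy⟩ := Finset.mem_image.1 this
    exact ⟨y, hy⟩
  choose σ hσ using hex
  refine ⟨⟨⟨⟨σ, ?_⟩, ?_⟩, ?_, ?_⟩, RingHom.ext hσ⟩
  · exact g.injective (by simp [hσ])
  · exact fun x y => g.injective (by simp [hσ])
  · exact g.injective (by simp [hσ])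
  · exact fun x y => g.injective (by simp [hσ])

/-! ### Homomorphisms from `SL₂(F)` to `PGL₂(k)` -/

section Rigidity

variable {F k : Type*} [Field F] [Field k]

/-- Once `slU 1` is sent to the elementary unipotent class, the upper unipotent group is mapped
through a field homomorphism `f : F → k`. Conjugation by the diagonal torus gives
`f (a² t) = f (a²) f t`, and every element of `F` is a difference of two squares. -/
lemma exists_ringHom_of_unipotent (h2 : (2 : F) ≠ 0)
    (φ : Matrix.SpecialLinearGroup (Fin 2) F →* PGL2 k) (h : PGLRep (φ (slU 1)) 1 1 0 1) :
    ∃ f : F →+* k, ∀ t, PGLRep (φ (slU t)) 1 (f t) 0 1 := by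
  have hex (t : F) : ∃ x, PGLRep (φ (slU t)) 1 x 0 1 :=
    h.unipotent_of_commute (by
      rw [Commute, SemiconjBy, ← map_mul, ← map_mul, ← slU_add, ← slU_add, add_comm])
  choose f hf using hex
  have huniq {X : PGL2 k} {x y : k} (h1 : PGLRep X 1 x 0 1) (h2 : PGLRep X 1 y 0 1) : x = y := by
    obtain ⟨r, hr, e1, e2, e3, e4⟩ := h1.unique h2
    have : r = 1 := by linear_combination -e1
    rw [e2, this, one_mul]
  have hf1 : f 1 = 1 := huniq (hf 1) h
  have hadd (s t : F) : f (s + t) = f s + f t := by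
    refine huniq (hf (s + t)) ?_
    rw [slU_add, map_mul]
    exact ((hf s).mul (hf t)).congr (by ring) (by ring) (by ring) (by ring)
  have hf0 : f 0 = 0 := by have := hadd 0 0; simp at this; exact this
  have hsq (a t : F) : f (a ^ 2 * t) = f (a ^ 2) * f t := by
    by_cases ha : a = 0
    · simp [ha, hf0]
    obtain ⟨x, y, c, z, hD⟩ := PGLRep.exists_rep (φ (slD a ha))
    have hrel (t : F) := congrArg φ (slD_mul_slU a ha t)
    simp only [map_mul] at hrel
    have hrel' (t : F) := (hD.mul (hf t)).unique (hrel t ▸ (hf (a ^ 2 * t)).mul hD)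
    -- the image of the torus normalizes the unipotent group, so it is upper triangular
    have hc : c = 0 := by
      by_contra hc
      obtain ⟨r, hr, e1, e2, e3, e4⟩ := hrel' 1
      rw [hf1] at e4
      have : r = 1 := by
        apply mul_right_cancel₀ hc
        linear_combination -e3
      subst this
      exact hc (by linear_combination -e4)
    subst hc
    have hdet := hD.det
    have hx : x ≠ 0 := by rintro rfl; simp at hdet
    have hz : z ≠ 0 := by rintro rfl; simp at hdet
    have hmul (t : F) : f (a ^ 2 * t) * z = x * f t := by
      obtain ⟨r, hr, e1, e2, e3, e4⟩ := hrel' t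
      have : r = 1 := by
        apply mul_right_cancel₀ hx
        linear_combination -e1
      subst this
      linear_combination e2
    have h1 := hmul 1
    rw [mul_one, hf1, mul_one] at h1
    apply mul_right_cancel₀ hz
    rw [hmul t, ← h1]
    ring
  have hneg (t : F) : f (-t) = - f t := by
    have := hadd t (-t)
    rw [add_neg_cancel, hf0] at this
    linear_combination -this
  have hmul (s t : F) : f (s * t) = f s * f t := by
    have hs : s = ((s + 1) / 2) ^ 2 + -((s - 1) / 2) ^ 2 := by field_simp; ring
    rw [hs, add_mul, hadd, hadd, neg_mul, hneg, hneg, hsq, hsq]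
    ring
  exact ⟨⟨⟨⟨f, hf1⟩, hmul⟩, hf0, hadd⟩, hf⟩

/-- After a further conjugation by a unipotent class, the Weyl element is sent to the Weyl
element: `slW ^ 2 = -1` and `(slU 1 * slW) ^ 3 = 1` pin down the image of `slW`. -/
lemma exists_conj_weyl (h2 : (2 : k) ≠ 0)
    (φ : Matrix.SpecialLinearGroup (Fin 2) F →* PGL2 k) (f : F →+* k)
    (hf : ∀ t, PGLRep (φ (slU t)) 1 (f t) 0 1) (hW : φ slW ≠ 1) (hneg : φ (-1) = 1) :
    ∃ B : PGL2 k, (∀ t, PGLRep (B * φ (slU t) * B⁻¹) 1 (f t) 0 1) ∧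
      PGLRep (B * φ slW * B⁻¹) 0 1 (-1) 0 := by
  obtain ⟨a, b, c, d, hw⟩ := PGLRep.exists_rep (φ slW)
  have hu : PGLRep (φ (slU 1)) 1 1 0 1 := by simpa using hf 1
  have hsq : φ slW * φ slW = 1 := by rw [← map_mul, slW_sq, hneg]
  have hcube : (φ (slU 1) * φ slW) * (φ (slU 1) * φ slW) * (φ (slU 1) * φ slW) = 1 := by
    simp only [← map_mul, slU_slW_cube, map_one]
  have hc : c ≠ 0 := by
    rintro rfl
    have h1 := hw.mul hw
    rw [hsq] at h1
    obtain ⟨r, hr, e1, e2, e3, e4⟩ := PGLRep.one.unique h1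
    have h3 := ((hu.mul hw).mul (hu.mul hw)).mul (hu.mul hw)
    rw [hcube] at h3
    obtain ⟨r', hr', e1', e2', e3', e4'⟩ := PGLRep.one.unique h3
    have ha : a ^ 2 ≠ 0 := by
      intro h; apply hr; linear_combination h - e1
    have had : a = d := by
      apply mul_left_cancel₀ ha
      linear_combination e1' - e4' - d * (e1 - e4)
    subst had
    have hb : b = 0 := by
      have h0 : (2 * a) * b = 0 := by linear_combination e2
      rcases mul_eq_zero.1 h0 with h | h
      · exact absurd h (mul_ne_zero h2 (by rintro rfl; simp at ha))
      · exact h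
    subst hb
    exact hW (PGLRep.one.eq_of_smul hw a (by ring) (by ring) (by ring) (by ring)).symm
  -- conjugate so that the image of `slW` sends the fixed point of the unipotent group to `0`
  obtain ⟨B, hB⟩ := PGLRep.exists_class (a := (1 : k)) (b := -a / c) (c := 0) (d := 1) (by simp)
  have hU (t : F) : PGLRep (B * φ (slU t) * B⁻¹) 1 (f t) 0 1 :=
    ((hB.mul (hf t)).mul hB.inv).congr (by ring) (by ring) (by ring) (by ring)
  obtain ⟨b', d', hw'⟩ : ∃ b' d', PGLRep (B * φ slW * B⁻¹) 0 b' c d' :=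
    ⟨_, _, ((hB.mul hw).mul hB.inv).congr (by field_simp; ring) rfl (by ring) rfl⟩
  have hu' : PGLRep (B * φ (slU 1) * B⁻¹) 1 1 0 1 := by simpa using hU 1
  refine ⟨B, hU, ?_⟩
  have hdet := hw'.det
  have hb' : b' ≠ 0 := by rintro rfl; simp at hdet
  have h1 := hw'.mul hw'
  rw [show B * φ slW * B⁻¹ * (B * φ slW * B⁻¹) = B * (φ slW * φ slW) * B⁻¹ by group, hsq, mul_one,
    mul_inv_cancel] at h1
  obtain ⟨r, hr, e1, e2, e3, e4⟩ := PGLRep.one.unique h1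
  have hd' : d' = 0 := by
    apply mul_left_cancel₀ hb'
    linear_combination e2
  subst hd'
  have h3 := ((hu'.mul hw').mul (hu'.mul hw')).mul (hu'.mul hw')
  rw [show (B * φ (slU 1) * B⁻¹ * (B * φ slW * B⁻¹)) * (B * φ (slU 1) * B⁻¹ * (B * φ slW * B⁻¹)) *
      (B * φ (slU 1) * B⁻¹ * (B * φ slW * B⁻¹)) =
      B * ((φ (slU 1) * φ slW) * (φ (slU 1) * φ slW) * (φ (slU 1) * φ slW)) * B⁻¹ by group,
    hcube, mul_one, mul_inv_cancel] at h3
  obtain ⟨r', hr', e1', e2', e3', e4'⟩ := PGLRep.one.unique h3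
  have hbc : c = -b' := by
    apply mul_left_cancel₀ (pow_ne_zero 2 hc)
    linear_combination e3'
  exact hw'.smul (inv_ne_zero hb') (by ring) (by field_simp) (by rw [hbc]; field_simp) (by ring)

/-- A homomorphism `SL₂(F) → PGL₂(k)` that kills `-1` but neither `slU 1` nor `slW` is conjugate
to a standard one. -/
lemma sl_rigidity [IsAlgClosed k] (p : ℕ) [Fact p.Prime] [CharP k p] [CharP F p] (hp : p ≠ 2)
    (φ : Matrix.SpecialLinearGroup (Fin 2) F →* PGL2 k)
    (hU : φ (slU 1) ≠ 1) (hW : φ slW ≠ 1) (hneg : φ (-1) = 1) :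
    ∃ (B : PGL2 k) (f : F →+* k), ∀ M : Matrix.SpecialLinearGroup (Fin 2) F,
      B * φ M * B⁻¹ = stdHom f M.toGL := by
  have hk2 : (2 : k) ≠ 0 := Ring.two_ne_zero (by rwa [ringChar.eq k p])
  have hF2 : (2 : F) ≠ 0 := Ring.two_ne_zero (by rwa [ringChar.eq F p])
  obtain ⟨B₁, h₁⟩ := PGLRep.exists_conj_unipotent (X := φ (slU 1)) p
    (by rw [← map_pow, slU_one_pow, CharP.cast_eq_zero, slU_zero, map_one]) hU
  obtain ⟨f, hf⟩ := exists_ringHom_of_unipotent hF2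
    ((MulAut.conj B₁).toMonoidHom.comp φ) h₁
  obtain ⟨B₂, h₂, h₃⟩ := exists_conj_weyl hk2 ((MulAut.conj B₁).toMonoidHom.comp φ) f hf
    (by simpa using hW) (by simp [hneg])
  refine ⟨B₂ * B₁, f, fun M => ?_⟩
  have hM := sl_subgroup_eq_top
    (((MulAut.conj (B₂ * B₁)).toMonoidHom.comp φ).eqLocus
      ((stdHom f).comp Matrix.SpecialLinearGroup.toGL)) ?_ ?_ M
  · exact hM
  · intro t
    refine PGLRep.eq (a := 1) (b := f t) (c := 0) (d := 1) ?_ ?_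
    · simpa [mul_assoc] using h₂ t
    · exact stdHom_slU_rep f t
  · refine PGLRep.eq (a := 0) (b := 1) (c := -1) (d := 0) ?_ ?_
    · simpa [mul_assoc] using h₃
    · exact stdHom_slW_rep f

/-- The centralizer in `PGL₂(k)` of the standard image of `SL₂(F)` is trivial. -/
lemma eq_one_of_commute_std (f : F →+* k) (X : PGL2 k)
    (h : ∀ M : Matrix.SpecialLinearGroup (Fin 2) F, Commute X (stdHom f M.toGL)) : X = 1 := by
  have hu : PGLRep (stdHom f (slU 1).toGL) 1 1 0 1 := by
    simpa using stdHom_slU_rep f 1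
  have hw : PGLRep (stdHom f (slW).toGL) 0 1 (-1) 0 :=
    stdHom_slW_rep f
  obtain ⟨x, hx⟩ := hu.unipotent_of_commute (h _)
  have h1 := hx.mul hw
  rw [(h slW).eq] at h1
  obtain ⟨r, hr, e1, e2, e3, e4⟩ := h1.unique (hw.mul hx)
  have hx0 : x = 0 := by
    have : r * x = 0 := by linear_combination e1
    exact (mul_eq_zero.1 this).resolve_left hr
  subst hx0
  exact hx.eq PGLRep.one

/-- The analogue of `sl_rigidity` for `GL₂(F)`. Two homomorphisms on `GL₂(F)` agreeing on the
normal subgroup `SL₂(F)` differ by elements centralizing the image of `SL₂(F)`. -/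
lemma gl_rigidity [IsAlgClosed k] (p : ℕ) [Fact p.Prime] [CharP k p] [CharP F p] (hp : p ≠ 2)
    (φ : GL (Fin 2) F →* PGL2 k) (hφ : φ.ker = Subgroup.center (GL (Fin 2) F)) :
    ∃ (B : PGL2 k) (f : F →+* k), ∀ M : GL (Fin 2) F, B * φ M * B⁻¹ = stdHom f M := by
  have hker (M : Matrix.SpecialLinearGroup (Fin 2) F) :
      φ M.toGL = 1 ↔ M ∈ Subgroup.center (Matrix.SpecialLinearGroup (Fin 2) F) := by
    rw [← MonoidHom.mem_ker, hφ, Matrix.SpecialLinearGroup.toGL_mem_center_iff]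
  obtain ⟨B, f, h⟩ := sl_rigidity p hp (φ.comp Matrix.SpecialLinearGroup.toGL)
    (fun h => slU_one_notMem_center ((hker _).1 h)) (fun h => slW_notMem_center ((hker _).1 h))
    ((hker _).2 (Subgroup.mem_center_iff.2 (by simp)))
  refine ⟨B, f, fun M => ?_⟩
  have key : (stdHom f M)⁻¹ * (B * φ M * B⁻¹) = 1 := by
    refine eq_one_of_commute_std f _ fun N => ?_
    obtain ⟨N', hN'⟩ : ∃ N' : Matrix.SpecialLinearGroup (Fin 2) F,
        N'.toGL = M * N.toGL * M⁻¹ := by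
      refine ⟨⟨(M * N.toGL * M⁻¹).val, ?_⟩, Units.ext rfl⟩
      rw [← Matrix.GeneralLinearGroup.val_det_apply]
      simp
    have e1 : (B * φ M * B⁻¹) * stdHom f N.toGL * (B * φ M * B⁻¹)⁻¹ = stdHom f N'.toGL := by
      rw [← h N, ← h N']
      simp only [MonoidHom.comp_apply, hN', map_mul, map_inv]
      group
    have e2 : stdHom f N'.toGL = stdHom f M * stdHom f N.toGL * (stdHom f M)⁻¹ := by
      rw [hN', map_mul, map_mul, map_inv]
    rw [e2, mul_inv_eq_iff_eq_mul] at e1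
    rw [Commute, SemiconjBy, mul_assoc, e1]
    group
  exact (inv_mul_eq_one.1 key).symm

/-- If conjugation by `B` turns a parametrization of `G` into `ρ`, up to a surjective
reparametrization, then it turns `G` into the image of `ρ`. -/
lemma map_conj_eq_range {H : Type*} [Group H] (ρ φ : H →* PGL2 k) (G : Subgroup (PGL2 k))
    (hφ : φ.range = G) (τ : H → H) (hτ : Function.Surjective τ) (B : PGL2 k)
    (h : ∀ M, B * φ M * B⁻¹ = ρ (τ M)) :
    Subgroup.map (MulAut.conj B).toMonoidHom G = ρ.range := by
  ext x
  subst hφ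
  constructor
  · rintro ⟨_, ⟨M, rfl⟩, rfl⟩
    exact ⟨τ M, (h M).symm⟩
  · rintro ⟨N, rfl⟩
    obtain ⟨M, rfl⟩ := hτ N
    exact ⟨φ M, ⟨M, rfl⟩, h M⟩

end Rigidity

/-! ### The conjugacy theorem -/

/-- For `k` algebraically closed of characteristic `p ≠ 2` and `ι : F_q → k` the field
inclusion (`q = p^s`): every subgroup of `PGL₂(k)` abstractly isomorphic to `PGL₂(F_q)`
is conjugate to the "standard" image of `PGL₂(F_q)` in `PGL₂(k)` (classes of matrices
with entries in `F_q`), and likewise every subgroup abstractly isomorphic to `PSL₂(F_q)`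
is conjugate to the image of `PSL₂(F_q)` (classes of matrices with entries in `F_q` and
determinant `1`). -/
theorem PGL2_and_PSL2_subgroups_conjugate_to_standard
    {k : Type*} [Field k] [IsAlgClosed k] (p : ℕ) [Fact p.Prime] [CharP k p]
    (hp : p ≠ 2) (s : ℕ) (hs : 1 ≤ s) (ι : GaloisField p s →+* k)
    (G : Subgroup (PGL2 k)) :
    (Nonempty (G ≃* PGL2 (GaloisField p s)) →
      ∃ B : PGL2 k,
        Subgroup.map (MulAut.conj B).toMonoidHom G =
          Subgroup.closure {x : PGL2 k |
            ∃ (M : GL (Fin 2) (GaloisField p s)) (M' : GL (Fin 2) k),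
              M'.val = M.val.map ι ∧ (QuotientGroup.mk M' : PGL2 k) = x}) ∧
    (Nonempty (G ≃* PSL2 (GaloisField p s)) →
      ∃ B : PGL2 k,
        Subgroup.map (MulAut.conj B).toMonoidHom G =
          Subgroup.closure {x : PGL2 k |
            ∃ M : Matrix (Fin 2) (Fin 2) (GaloisField p s), M.det = 1 ∧
              ∃ M' : GL (Fin 2) k,
                M'.val = M.map ι ∧ (QuotientGroup.mk M' : PGL2 k) = x}) := by
  have hsurj (σ : GaloisField p s →+* GaloisField p s) :
      ∃ τ : GaloisField p s →+* GaloisField p s, ∀ x, σ (τ x) = x := by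
    obtain ⟨τ, hτ⟩ := exists_comp_eq (RingHom.id _) σ
    exact ⟨τ, RingHom.congr_fun hτ⟩
  constructor
  · rintro ⟨e⟩
    have hrange : (G.subtype.comp (e.symm.toMonoidHom.comp
        (QuotientGroup.mk' (Subgroup.center (GL (Fin 2) (GaloisField p s)))))).range = G := by
      rw [MonoidHom.range_comp, MonoidHom.range_eq_top.2
        (e.symm.surjective.comp (QuotientGroup.mk'_surjective _)), ← MonoidHom.range_eq_map,
        Subgroup.range_subtype]
    obtain ⟨B, f, h⟩ := gl_rigidity p hp
      (G.subtype.comp (e.symm.toMonoidHom.comp (QuotientGroup.mk' _))) (by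
        ext M
        rw [MonoidHom.mem_ker, ← QuotientGroup.eq_one_iff]
        simp)
    obtain ⟨σ, rfl⟩ := exists_comp_eq f ι
    obtain ⟨τ, hτ⟩ := hsurj σ
    refine ⟨B, ?_⟩
    have hset : {x : PGL2 k | ∃ (M : GL (Fin 2) (GaloisField p s)) (M' : GL (Fin 2) k),
        M'.val = M.val.map ι ∧ (QuotientGroup.mk M' : PGL2 k) = x} = (stdHom ι).range := by
      ext x
      constructor
      · rintro ⟨M, M', hM, rfl⟩
        exact ⟨M, congrArg (QuotientGroup.mk' _)
          (Units.ext hM.symm : Matrix.GeneralLinearGroup.map ι M = M')⟩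
      · rintro ⟨M, rfl⟩
        exact ⟨M, Matrix.GeneralLinearGroup.map ι M, rfl, rfl⟩
    rw [hset, Subgroup.closure_eq]
    refine map_conj_eq_range _ _ G hrange (Matrix.GeneralLinearGroup.map σ) (fun N => ?_) B h
    exact ⟨Matrix.GeneralLinearGroup.map τ N, Units.ext (Matrix.ext fun i j => hτ _)⟩
  · rintro ⟨e⟩
    have hrange : (G.subtype.comp (e.symm.toMonoidHom.comp (QuotientGroup.mk' (Subgroup.center
        (Matrix.SpecialLinearGroup (Fin 2) (GaloisField p s)))))).range = G := by
      rw [MonoidHom.range_comp, MonoidHom.range_eq_top.2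
        (e.symm.surjective.comp (QuotientGroup.mk'_surjective _)), ← MonoidHom.range_eq_map,
        Subgroup.range_subtype]
    have hker (M : Matrix.SpecialLinearGroup (Fin 2) (GaloisField p s)) :
        (G.subtype.comp (e.symm.toMonoidHom.comp (QuotientGroup.mk' (Subgroup.center
          (Matrix.SpecialLinearGroup (Fin 2) (GaloisField p s)))))) M = 1 ↔
        M ∈ Subgroup.center (Matrix.SpecialLinearGroup (Fin 2) (GaloisField p s)) := by
      rw [← QuotientGroup.eq_one_iff]
      simp
    obtain ⟨B, f, h⟩ := sl_rigidity p hp _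
      (fun h => slU_one_notMem_center ((hker _).1 h)) (fun h => slW_notMem_center ((hker _).1 h))
      ((hker _).2 (Subgroup.mem_center_iff.2 (by simp)))
    obtain ⟨σ, rfl⟩ := exists_comp_eq f ι
    obtain ⟨τ, hτ⟩ := hsurj σ
    refine ⟨B, ?_⟩
    have hset : {x : PGL2 k | ∃ M : Matrix (Fin 2) (Fin 2) (GaloisField p s), M.det = 1 ∧
        ∃ M' : GL (Fin 2) k, M'.val = M.map ι ∧ (QuotientGroup.mk M' : PGL2 k) = x} =
        ((stdHom ι).comp Matrix.SpecialLinearGroup.toGL).range := by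
      ext x
      constructor
      · rintro ⟨M, hdet, M', hM, rfl⟩
        exact ⟨⟨M, hdet⟩, congrArg (QuotientGroup.mk' _) (Units.ext hM.symm :
          Matrix.GeneralLinearGroup.map ι (Matrix.SpecialLinearGroup.toGL ⟨M, hdet⟩) = M')⟩
      · rintro ⟨M, rfl⟩
        exact ⟨M.val, M.det_coe, Matrix.GeneralLinearGroup.map ι M.toGL, rfl, rfl⟩
    rw [hset, Subgroup.closure_eq]
    refine map_conj_eq_range _ _ G hrange (Matrix.SpecialLinearGroup.map σ) (fun N => ?_) B
      fun M => (h M).trans (congrArg (QuotientGroup.mk' _) (Units.ext rfl))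
    exact ⟨Matrix.SpecialLinearGroup.map τ N, Subtype.ext (Matrix.ext fun i j => hτ _)⟩
end
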